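/- Let Γ be a d×d positive definite matrix, θ, θ̂ ∈ ℝ^d with ‖θ̂ − θ‖_Γ ≤ γ for some γ ≥ 0, and let z_a, z_b ∈ ℝ^d with neither action eliminated, i.e. ⟨θ̂, z_a − z_b⟩ ≤ γ·‖z_a − z_b‖_{Γ⁻¹} and ⟨θ̂, z_b − z_a⟩ ≤ γ·‖z_a − z_b‖_{Γ⁻¹}. Let μ := (z_a + z_b)/2 and let π be the uniform distribution on {z_a, z_b}. Then ⟨θ, z_a − μ⟩ ≤ γ·‖z_a − z_b‖_{Γ⁻¹} ≤ 2γ·√(tr(Γ⁻¹ · Cov_{z∼π}(z))), where Cov_{z∼π}(z) = (z_a − μ)(z_a − μ)ᵀ/2 + (z_b − μ)(z_b − μ)ᵀ/2. -/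

import Mathlib

open Matrix

/-!
A point `w` with `θ̂ ⬝ᵥ w ≤ γ ‖w‖_{Γ⁻¹}` satisfies `θ ⬝ᵥ w ≤ 2γ ‖w‖_{Γ⁻¹}`, because the estimation
error `θ̂ - θ` costs at most `‖θ̂ - θ‖_Γ ‖w‖_{Γ⁻¹}` by duality of the two norms. For `w = z_a - z_b`
the factor `2` is absorbed by `z_a - μ = w / 2`. The covariance of the uniform distribution on the
pair has rank one, `Cov = w wᵀ / 4`, so that `tr (Γ⁻¹ Cov) = ‖w‖²_{Γ⁻¹} / 4` and the second
inequality is an equality.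
-/

section

variable {n : Type*}

/-- The covariance matrix of the uniform distribution on the pair `{a, b}`, whose mean is
`midpoint ℝ a b`, written as the average of the two centred outer products. -/
noncomputable def uniformPairCov (a b : n → ℝ) : Matrix n n ℝ :=
  (2 : ℝ)⁻¹ • vecMulVec (a - midpoint ℝ a b) (a - midpoint ℝ a b) +
    (2 : ℝ)⁻¹ • vecMulVec (b - midpoint ℝ a b) (b - midpoint ℝ a b)

theorem uniformPairCov_eq_smul_vecMulVec (a b : n → ℝ) :
    uniformPairCov a b = (4 : ℝ)⁻¹ • vecMulVec (a - b) (a - b) := by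
  have hb : b - midpoint ℝ a b = -((2 : ℝ)⁻¹ • (a - b)) := by
    rw [right_sub_midpoint, invOf_eq_inv, ← smul_neg, neg_sub]
  rw [uniformPairCov, hb, left_sub_midpoint, invOf_eq_inv, neg_vecMulVec, vecMulVec_neg, neg_neg,
    smul_vecMulVec, vecMulVec_smul]
  module

variable [Fintype n]

theorem trace_mul_vecMulVec {m R : Type*} [Fintype m] [NonUnitalCommSemiring R] (M : Matrix m n R)
    (x : n → R) (y : m → R) : (M * vecMulVec x y).trace = y ⬝ᵥ M *ᵥ x := by
  rw [mul_vecMulVec, trace_vecMulVec, dotProduct_comm]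

/-- The Mahalanobis norm `‖x‖_M = √(xᵀ M x)`. It is defined for every real square matrix, but is a
norm only for positive definite `M`; where `xᵀ M x` is negative, `Real.sqrt` makes it `0`. -/
noncomputable def mahalanobisNorm (M : Matrix n n ℝ) (x : n → ℝ) : ℝ :=
  √(x ⬝ᵥ M *ᵥ x)

theorem mahalanobisNorm_nonneg (M : Matrix n n ℝ) (x : n → ℝ) : 0 ≤ mahalanobisNorm M x :=
  Real.sqrt_nonneg _

theorem two_mul_sqrt_trace_mul_uniformPairCov (M : Matrix n n ℝ) (a b : n → ℝ) :
    2 * √(M * uniformPairCov a b).trace = mahalanobisNorm M (a - b) := by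
  have hsqrt : √(4 : ℝ) = 2 := by norm_num
  rw [uniformPairCov_eq_smul_vecMulVec, mul_smul_comm, trace_smul, trace_mul_vecMulVec,
    smul_eq_mul, Real.sqrt_mul (by positivity), Real.sqrt_inv, hsqrt,
    mul_inv_cancel_left₀ two_ne_zero, mahalanobisNorm]

theorem abs_dotProduct_mulVec_le_mahalanobisNorm_mul {M : Matrix n n ℝ} (hM : M.PosSemidef)
    (x y : n → ℝ) : |x ⬝ᵥ M *ᵥ y| ≤ mahalanobisNorm M x * mahalanobisNorm M y := by
  classical
  have hnonneg (v : n → ℝ) : 0 ≤ v ⬝ᵥ M *ᵥ v := hM.dotProduct_mulVec_nonneg v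
  have hsymm : LinearMap.IsSymm (toBilin' M) := LinearMap.BilinForm.isSymm_iff.mp <|
    isSymm_toBilin'_iff_isSymm.mpr (isHermitian_iff_isSymm.mp hM.isHermitian)
  have hsq : (x ⬝ᵥ M *ᵥ y) ^ 2 ≤ (x ⬝ᵥ M *ᵥ x) * (y ⬝ᵥ M *ᵥ y) := by
    simpa only [toBilin'_apply'] using (toBilin' M).apply_sq_le_of_symm
      (fun v => (hnonneg v).trans_eq (toBilin'_apply' M v v).symm) hsymm x y
  rw [mahalanobisNorm, mahalanobisNorm, ← Real.sqrt_mul (hnonneg x)]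
  exact Real.abs_le_sqrt hsq

variable [DecidableEq n]

theorem abs_dotProduct_le_mahalanobisNorm_mul_inv {M : Matrix n n ℝ} (hM : M.PosDef)
    (x y : n → ℝ) : |x ⬝ᵥ y| ≤ mahalanobisNorm M x * mahalanobisNorm M⁻¹ y := by
  have hy : M *ᵥ M⁻¹ *ᵥ y = y := by
    rw [mulVec_mulVec, mul_nonsing_inv _ ((isUnit_iff_isUnit_det M).mp hM.isUnit), one_mulVec]
  have hnorm : mahalanobisNorm M (M⁻¹ *ᵥ y) = mahalanobisNorm M⁻¹ y := by
    rw [mahalanobisNorm, hy, dotProduct_comm, mahalanobisNorm]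
  simpa only [hy, hnorm] using
    abs_dotProduct_mulVec_le_mahalanobisNorm_mul hM.posSemidef x (M⁻¹ *ᵥ y)

theorem dotProduct_le_add_of_mahalanobisNorm_sub_le {M : Matrix n n ℝ} (hM : M.PosDef) {γ : ℝ}
    {θ θhat : n → ℝ} (hest : mahalanobisNorm M (θhat - θ) ≤ γ) (w : n → ℝ) :
    θ ⬝ᵥ w ≤ θhat ⬝ᵥ w + γ * mahalanobisNorm M⁻¹ w := by
  have herror : |(θhat - θ) ⬝ᵥ w| ≤ γ * mahalanobisNorm M⁻¹ w :=
    (abs_dotProduct_le_mahalanobisNorm_mul_inv hM _ w).trans <|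
      mul_le_mul_of_nonneg_right hest (mahalanobisNorm_nonneg _ w)
  rw [sub_dotProduct] at herror
  linarith [neg_le_of_abs_le herror]

theorem stmt_16_general {Γ : Matrix n n ℝ} (hΓ : Γ.PosDef) {γ : ℝ} {θ θhat : n → ℝ}
    (hest : mahalanobisNorm Γ (θhat - θ) ≤ γ) {za zb : n → ℝ}
    (hab : θhat ⬝ᵥ (za - zb) ≤ γ * mahalanobisNorm Γ⁻¹ (za - zb)) :
    θ ⬝ᵥ (za - midpoint ℝ za zb) ≤ γ * mahalanobisNorm Γ⁻¹ (za - zb) ∧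
      γ * mahalanobisNorm Γ⁻¹ (za - zb) = 2 * γ * √(Γ⁻¹ * uniformPairCov za zb).trace := by
  constructor
  · have hregret := dotProduct_le_add_of_mahalanobisNorm_sub_le hΓ hest (za - zb)
    rw [left_sub_midpoint, invOf_eq_inv, dotProduct_smul, smul_eq_mul]
    linarith
  · rw [← two_mul_sqrt_trace_mul_uniformPairCov]
    ring

end

/-- **Instantaneous regret bound for the uniform distribution over two surviving actions.**
Let `Γ ≻ 0`, `‖θ̂ − θ‖_Γ ≤ γ`, `γ ≥ 0`, and suppose neither of the two actions with features
`z_a, z_b` eliminates the other.  With `μ := (z_a + z_b)/2` and `π` uniform on `{z_a, z_b}`,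
`⟨θ, z_a − μ⟩ ≤ γ‖z_a − z_b‖_{Γ⁻¹} ≤ 2γ √(tr(Γ⁻¹ Cov_{z∼π}(z)))`, where
`Cov_{z∼π}(z) = (z_a−μ)(z_a−μ)ᵀ/2 + (z_b−μ)(z_b−μ)ᵀ/2`. -/
theorem stmt_16 {d : ℕ} (γ : ℝ) (hγ : 0 ≤ γ)
    (Γ : Matrix (Fin d) (Fin d) ℝ) (hΓ : Γ.PosDef)
    (θ θhat : Fin d → ℝ)
    (hest : Real.sqrt ((θhat - θ) ⬝ᵥ Γ.mulVec (θhat - θ)) ≤ γ)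
    (za zb : Fin d → ℝ)
    (hab : θhat ⬝ᵥ (za - zb) ≤ γ * Real.sqrt ((za - zb) ⬝ᵥ Γ⁻¹.mulVec (za - zb)))
    (hba : θhat ⬝ᵥ (zb - za) ≤ γ * Real.sqrt ((za - zb) ⬝ᵥ Γ⁻¹.mulVec (za - zb))) :
    θ ⬝ᵥ (za - (2:ℝ)⁻¹ • (za + zb)) ≤
        γ * Real.sqrt ((za - zb) ⬝ᵥ Γ⁻¹.mulVec (za - zb)) ∧
      γ * Real.sqrt ((za - zb) ⬝ᵥ Γ⁻¹.mulVec (za - zb)) ≤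
        2 * γ * Real.sqrt ((Γ⁻¹ *
          ((2:ℝ)⁻¹ • vecMulVec (za - (2:ℝ)⁻¹ • (za + zb)) (za - (2:ℝ)⁻¹ • (za + zb)) +
           (2:ℝ)⁻¹ • vecMulVec (zb - (2:ℝ)⁻¹ • (za + zb)) (zb - (2:ℝ)⁻¹ • (za + zb)))).trace) := by
  simpa only [mahalanobisNorm, uniformPairCov, midpoint_eq_smul_add, invOf_eq_inv] using
    (stmt_16_general hΓ hest hab).imp_right Eq.le
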